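/- arXiv:2303.01967 — 3 statements merged into one kernel-verified Lean document; each statement's English description precedes it below -/
import Mathlib

section
/- There exists a constant C > 0 such that for every integer n ≥ 1 there exist real coefficients a_0, a_1, …, a_n and positive real numbers ε_1, …, ε_n such that for all x ∈ [0,1], |√x − (a_0 + Σ_{k=1}^n a_k/(1 + x/ε_k))| ≤ exp(−C·√n). That is, the function √x on [0,1] admits root-exponentially convergent approximations by degree-n rational functions written in partial fraction form with poles −ε_k on the negative real axis. -/
open MeasureTheory

noncomputable def gk (v : ℝ) : ℝ := 1 / (Real.exp v + Real.exp (-v))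

lemma gk_pos (v : ℝ) : 0 < gk v := by unfold gk; positivity

lemma gk_le (v : ℝ) : gk v ≤ Real.exp (-|v|) := by
  unfold gk
  rw [Real.exp_neg |v|, ← one_div]
  apply one_div_le_one_div_of_le (Real.exp_pos _)
  rcases abs_cases v with h | h <;> rw [h.1] <;> linarith [Real.exp_pos v, Real.exp_pos (-v)]

lemma ptwise (η v : ℝ) :
    |Real.sigmoid v * (1 - Real.sigmoid v)| •
      (((Real.sigmoid v : ℝ) : ℂ) ^ ((1/2 + η * Complex.I : ℂ) - 1) *
       (1 - ((Real.sigmoid v : ℝ) : ℂ)) ^ ((1/2 - η * Complex.I : ℂ) - 1))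
      = Complex.exp (η * v * Complex.I) * (gk (v/2) : ℝ) := by
  obtain ⟨L, hL⟩ : ∃ L, Real.exp L = 1 + Real.exp (-v) :=
    ⟨_, Real.exp_log (by positivity)⟩
  have h1 : Real.sigmoid v = Real.exp (-L) := by
    rw [Real.sigmoid_def, ← hL, Real.exp_neg]
  have h2 : 1 - Real.sigmoid v = Real.exp (-v - L) := by
    rw [← Real.sigmoid_neg, ← Real.sigmoid_mul_rexp_neg, h1, ← Real.exp_add]; ring_nf
  have h2' : 1 - ((Real.sigmoid v : ℝ) : ℂ) = ((Real.exp (-v - L) : ℝ) : ℂ) := by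
    rw [← h2]; push_cast; rfl
  have h3 : gk (v/2) = Real.exp (-L - v/2) := by
    unfold gk
    have : Real.exp (v/2) + Real.exp (-(v/2)) = Real.exp (L + v/2) := by
      rw [Real.exp_add, hL, add_mul, one_mul, ← Real.exp_add]; ring_nf
    rw [this, one_div, ← Real.exp_neg]; ring_nf
  have hexp : ∀ (r : ℝ) (z : ℂ), ((Real.exp r : ℝ) : ℂ) ^ z = Complex.exp (r * z) := by
    intro r z
    rw [Complex.cpow_def_of_ne_zero (by exact_mod_cast (Real.exp_pos r).ne'),
      ← Complex.ofReal_log (Real.exp_pos r).le, Real.log_exp]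
  rw [h2', h2, h3, h1, hexp, hexp, abs_of_pos (by positivity), Complex.real_smul]
  push_cast
  simp only [← Complex.exp_add]
  congr 1
  ring

lemma ftA (η : ℝ) : ∫ v : ℝ, Complex.exp (η * v * Complex.I) * (gk (v/2) : ℝ)
    = Real.pi / Real.cosh (Real.pi * η) := by
  have h1 : ∫ v : ℝ, Complex.exp (η * v * Complex.I) * (gk (v/2) : ℝ)
      = Complex.betaIntegral (1/2 + η * Complex.I) (1/2 - η * Complex.I) := by
    unfold Complex.betaIntegral
    rw [intervalIntegral.integral_of_le zero_le_one, integral_Ioc_eq_integral_Ioo,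
      ← Real.range_sigmoid, ← Set.image_univ,
      integral_image_eq_integral_abs_deriv_smul MeasurableSet.univ
        (fun x _ => (Real.hasDerivAt_sigmoid x).hasDerivWithinAt)
        Real.sigmoid_injective.injOn, setIntegral_univ]
    refine integral_congr_ae (Filter.Eventually.of_forall fun v => ?_)
    exact (ptwise η v).symm
  have h2 := Complex.Gamma_mul_Gamma_eq_betaIntegral (s := 1/2 + η * Complex.I)
    (t := 1/2 - η * Complex.I) (by simp) (by simp)
  have h3 := Complex.Gamma_mul_Gamma_one_sub (1/2 + η * Complex.I)
  have e1 : (1/2 + η * Complex.I) + (1/2 - η * Complex.I) = 1 := by ring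
  have e2 : (1 : ℂ) - (1/2 + η * Complex.I) = 1/2 - η * Complex.I := by ring
  rw [e1, Complex.Gamma_one, one_mul] at h2
  rw [e2, h2] at h3
  rw [h1, h3]
  congr 1
  have e3 : (Real.pi : ℂ) * (1/2 + η * Complex.I) = Real.pi / 2 - (-(Real.pi * η : ℝ)) * Complex.I := by
    push_cast; ring
  rw [e3, Complex.sin_pi_div_two_sub, Complex.cos_mul_I]
  simp

open FourierTransform in
lemma ftB (h : ℝ) (hh : 0 < h) (w : ℝ) :
    𝓕 (fun t : ℝ => ((gk (h * t) : ℝ) : ℂ)) w = Real.pi / (2 * h) / Real.cosh (Real.pi ^ 2 * w / h) := by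
  rw [Real.fourier_real_eq_integral_exp_smul]
  have h0 : h ≠ 0 := hh.ne'
  have h0' : (h : ℂ) ≠ 0 := by exact_mod_cast h0
  have key := Measure.integral_comp_mul_left
    (fun v : ℝ => Complex.exp ((-(Real.pi * w / h) : ℝ) * v * Complex.I) * (gk (v/2) : ℝ)) (2 * h)
  rw [ftA] at key
  have : (∫ (v : ℝ), Complex.exp (↑(-2 * Real.pi * v * w) * Complex.I) • ((gk (h * v) : ℝ) : ℂ))
    = ∫ v : ℝ, Complex.exp ((-(Real.pi * w / h) : ℝ) * (2 * h * v : ℝ) * Complex.I) * (gk ((2 * h * v)/2) : ℝ) := by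
    congr 1; ext v
    rw [smul_eq_mul]
    congr 2
    · push_cast; field_simp
    · congr 1; ring
  rw [this, key, abs_of_pos (by positivity), Complex.real_smul]
  have e : Real.cosh (Real.pi * (-(Real.pi * w / h))) = Real.cosh (Real.pi ^ 2 * w / h) := by
    rw [← Real.cosh_neg]; congr 1; ring
  rw [e]
  push_cast
  field_simp

lemma exp_bound {c : ℝ} (hc : 0 < c) {t : ℝ} (ht : t ≠ 0) :
    Real.exp (-(c * |t|)) ≤ 2 / c ^ 2 * |t| ^ (-2 : ℝ) := by
  have ht' : 0 < |t| := abs_pos.mpr ht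
  rw [Real.rpow_neg ht'.le, Real.exp_neg]
  have := Real.quadratic_le_exp_of_nonneg (x := c * |t|) (by positivity)
  have h2 : (c * |t|) ^ 2 / 2 ≤ Real.exp (c * |t|) := by nlinarith [mul_pos hc ht']
  calc (Real.exp (c * |t|))⁻¹ ≤ ((c * |t|) ^ 2 / 2)⁻¹ := inv_anti₀ (by positivity) h2
    _ = _ := by
      norm_num
      field_simp
      rw [sq_abs]

lemma isBigO_of_exp {f : ℝ → ℂ} {K c : ℝ} (hK : 0 ≤ K) (hc : 0 < c) (hf : ∀ t, ‖f t‖ ≤ K * Real.exp (-(c * |t|))) :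
    f =O[Filter.cocompact ℝ] fun x => |x| ^ (-2 : ℝ) := by
  apply Asymptotics.IsBigO.of_bound (K * (2 / c ^ 2))
  have : ({0}ᶜ : Set ℝ) ∈ Filter.cocompact ℝ := isCompact_singleton.compl_mem_cocompact
  filter_upwards [this] with t ht
  have := exp_bound hc ht
  rw [Real.norm_of_nonneg (by positivity), mul_assoc]
  exact (hf t).trans (mul_le_mul_of_nonneg_left this hK)

lemma inv_cosh (y : ℝ) : 1 / Real.cosh y ≤ 2 * Real.exp (-|y|) := by
  have := gk_le y
  unfold gk at this
  rw [Real.cosh_eq]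
  calc _ = 2 * (1 / (Real.exp y + Real.exp (-y))) := by field_simp
    _ ≤ _ := by linarith

open FourierTransform in
lemma ftBound (h : ℝ) (hh : 0 < h) (w : ℝ) :
    ‖𝓕 (fun t : ℝ => ((gk (h * t) : ℝ) : ℂ)) w‖ ≤ Real.pi / h * Real.exp (-(Real.pi ^ 2 / h * |w|)) := by
  rw [ftB h hh]
  have e : (Real.pi : ℂ) / (2 * h) / Real.cosh (Real.pi ^ 2 * w / h) =
    ((Real.pi / (2 * h) * (1 / Real.cosh (Real.pi ^ 2 * w / h)) : ℝ) : ℂ) := by push_cast; ring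
  have hc := Real.cosh_pos (Real.pi ^ 2 * w / h)
  rw [e, Complex.norm_real, Real.norm_of_nonneg (by positivity)]
  have := inv_cosh (Real.pi ^ 2 * w / h)
  have e2 : |Real.pi ^ 2 * w / h| = Real.pi ^ 2 / h * |w| := by
    rw [abs_div, abs_mul, abs_of_pos hh, abs_of_pos (by positivity : 0 < Real.pi ^ 2)]; ring
  rw [e2] at this
  calc _ ≤ Real.pi / (2 * h) * (2 * Real.exp (-(Real.pi ^ 2 / h * |w|))) := by gcongr
    _ = _ := by field_simp

open FourierTransform in
lemma poisson (h : ℝ) (hh : 0 < h) (x : ℝ) :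
    ∑' n : ℤ, ((gk (h * (x + n)) : ℝ) : ℂ) =
    ∑' n : ℤ, 𝓕 (fun t : ℝ => ((gk (h * t) : ℝ) : ℂ)) n * fourier n (x : UnitAddCircle) := by
  refine Real.tsum_eq_tsum_fourier_of_rpow_decay (f := fun t : ℝ => ((gk (h * t) : ℝ) : ℂ))
    (b := 2) ?_ (by norm_num) ?_ ?_ x
  · unfold gk
    apply Complex.continuous_ofReal.comp
    apply Continuous.div (by fun_prop) (by fun_prop)
    intro t; positivity
  · apply isBigO_of_exp zero_le_one hh
    intro t
    rw [Complex.norm_real, Real.norm_of_nonneg (gk_pos _).le, one_mul]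
    have := gk_le (h * t)
    rwa [abs_mul, abs_of_pos hh] at this
  · exact isBigO_of_exp (by positivity) (by positivity) (ftBound h hh)

lemma summable_exp_abs {c : ℝ} (hc : 0 < c) : Summable fun n : ℤ => Real.exp (-(c * |(n:ℝ)|)) := by
  have h : Summable fun n : ℕ => Real.exp (-(c * n)) := by
    have := Real.summable_exp_nat_mul_iff.mpr (neg_neg_of_pos hc)
    refine this.congr fun n => by ring_nf
  apply Summable.of_nat_of_neg
  · simpa using h
  · simpa using h

/-- discretisation error -/
lemma discr (h : ℝ) (hh : 0 < h) (h1 : h ≤ 1) (x : ℝ) :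
    |h * ∑' n : ℤ, gk (h * (x + n)) - Real.pi / 2| ≤
      Real.pi * (∑' n : ℤ, Real.exp (-(1 * |(n:ℝ)|))) * Real.exp (-(1 / h)) := by
  have hp := poisson h hh x
  set F : ℝ → ℂ := FourierTransform.fourier (fun t : ℝ => ((gk (h * t) : ℝ) : ℂ)) with hF
  have hb : ∀ n : ℤ, ‖F n * fourier n (x : UnitAddCircle)‖ ≤ Real.pi / h * Real.exp (-(Real.pi ^ 2 / h * |(n:ℝ)|)) := by
    intro n
    rw [norm_mul]
    have : ‖fourier n (x : UnitAddCircle)‖ = 1 := by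
      rw [fourier_apply]; exact Circle.norm_coe _
    rw [this, mul_one]
    exact ftBound h hh n
  have hs : Summable fun n : ℤ => F n * fourier n (x : UnitAddCircle) :=
    Summable.of_norm_bounded ((summable_exp_abs (by positivity)).mul_left _) hb
  rw [hs.tsum_eq_add_tsum_ite 0] at hp
  have h00 : F (0:ℤ) * fourier 0 (x : UnitAddCircle) = Real.pi / (2 * h) := by
    rw [hF, ftB h hh]; simp
  rw [h00] at hp
  have hnorm : ‖∑' n : ℤ, if n = 0 then 0 else F n * fourier n (x : UnitAddCircle)‖ ≤
      Real.pi / h * Real.exp (-(1/h)) * ∑' n : ℤ, Real.exp (-(1 * |(n:ℝ)|)) := by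
    refine tsum_of_norm_bounded ((summable_exp_abs one_pos).hasSum.mul_left _) ?_
    intro n
    split_ifs with hn
    · rw [norm_zero]; positivity
    · refine (hb n).trans ?_
      rw [mul_assoc, ← Real.exp_add]
      gcongr
      have hn1 : (1:ℝ) ≤ |(n:ℝ)| := by exact_mod_cast Int.one_le_abs hn
      have hpi : (2:ℝ) ≤ Real.pi ^ 2 := by nlinarith [Real.pi_gt_three]
      have hi : 1 ≤ 1 / h := by rw [le_div_iff₀ hh]; linarith
      have : Real.pi ^ 2 / h * |(n:ℝ)| ≥ 2 * (1 / h) * |(n:ℝ)| := by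
        have : Real.pi ^ 2 / h = Real.pi ^ 2 * (1 / h) := by ring
        rw [this]; gcongr
      nlinarith
  have : ((h * ∑' n : ℤ, gk (h * (x + n)) - Real.pi / 2 : ℝ) : ℂ) =
      h * ∑' n : ℤ, if n = 0 then 0 else F n * fourier n (x : UnitAddCircle) := by
    push_cast
    rw [hp]
    have h0' : (h : ℂ) ≠ 0 := by exact_mod_cast hh.ne'
    field_simp
    ring
  rw [← Real.norm_eq_abs, ← Complex.norm_real, this, norm_mul, Complex.norm_real, Real.norm_of_nonneg hh.le]
  calc _ ≤ h * (Real.pi / h * Real.exp (-(1/h)) * ∑' n : ℤ, Real.exp (-(1 * |(n:ℝ)|))) := by gcongr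
    _ = _ := by field_simp

lemma gk_ge (v : ℝ) : Real.exp (-|v|) ≤ 2 * gk v := by
  unfold gk
  have h1 : Real.exp v ≤ Real.exp |v| := Real.exp_le_exp.mpr (le_abs_self v)
  have h2 : Real.exp (-v) ≤ Real.exp |v| := Real.exp_le_exp.mpr (neg_le_abs v)
  rw [Real.exp_neg |v|, mul_one_div, le_div_iff₀ (by positivity)]
  have := Real.exp_pos |v|
  calc (Real.exp |v|)⁻¹ * (Real.exp v + Real.exp (-v)) ≤ (Real.exp |v|)⁻¹ * (2 * Real.exp |v|) := by
        gcongr; linarith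
    _ = 2 := by field_simp

lemma exp_shift (h : ℝ) (hh : 0 < h) (x k : ℝ) :
    gk (h * (x + k)) ≤ Real.exp (h * |x|) * Real.exp (-(h * |k|)) := by
  refine (gk_le _).trans ?_
  rw [← Real.exp_add]
  gcongr
  rw [abs_mul, abs_of_pos hh]
  have : |k| ≤ |x + k| + |x| := by
    have := abs_sub (x + k) x
    simpa using this
  nlinarith

lemma summable_gk (h : ℝ) (hh : 0 < h) (x : ℝ) : Summable fun k : ℤ => gk (h * (x + k)) :=
  Summable.of_nonneg_of_le (fun _ => (gk_pos _).le) (fun k => exp_shift h hh x k)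
    ((summable_exp_abs hh).mul_left _)

noncomputable def K1 : ℝ := Real.pi * (∑' n : ℤ, Real.exp (-(1 * |(n:ℝ)|)))

lemma K1_nonneg : 0 ≤ K1 := by
  unfold K1
  have : 0 ≤ ∑' n : ℤ, Real.exp (-(1 * |(n:ℝ)|)) := tsum_nonneg fun _ => (Real.exp_pos _).le
  positivity

lemma sum_exp_le (h : ℝ) (hh : 0 < h) (h1 : h ≤ 1) :
    h * ∑' k : ℤ, Real.exp (-(h * |(k:ℝ)|)) ≤ 4 + 2 * K1 := by
  have hd := (abs_le.mp (discr h hh h1 0)).2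
  have hle : ∑' k : ℤ, Real.exp (-(h * |(k:ℝ)|)) ≤ ∑' k : ℤ, 2 * gk (h * (0 + k)) := by
    refine (summable_exp_abs hh).tsum_le_tsum (fun k => ?_) ((summable_gk h hh 0).mul_left 2)
    have := gk_ge (h * k)
    rw [abs_mul, abs_of_pos hh] at this
    rw [zero_add]
    exact this
  rw [tsum_mul_left] at hle
  have he : K1 * Real.exp (-(1/h)) ≤ K1 := by
    apply mul_le_of_le_one_right K1_nonneg
    rw [Real.exp_le_one_iff]
    have : 0 < 1/h := by positivity
    linarith
  unfold K1 at he
  have := mul_le_mul_of_nonneg_left hle hh.le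
  have := Real.pi_lt_four
  unfold K1
  linarith

lemma tail (h : ℝ) (hh : 0 < h) (h1 : h ≤ 1) (y : ℝ) (hy : 0 < y) (hy1 : y ≤ 1) (S : Finset ℤ) (M : ℝ)
    (hS : ∀ k : ℤ, k ∉ S → M ≤ |(k:ℝ)|) :
    y * h * |∑' k : ℤ, gk (h * (-Real.log y / h + k)) - ∑ k ∈ S, gk (h * (-Real.log y / h + k))|
      ≤ (8 + 4 * K1) * Real.exp (-(h * M / 2)) := by
  have hsum := summable_gk h hh (-Real.log y / h)
  have hsp := hsum.sum_add_tsum_subtype_compl S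
  have hb : ∀ k : ℤ, k ∉ S → y * gk (h * (-Real.log y / h + k)) ≤
      Real.exp (-(h * M / 2)) * Real.exp (-(h / 2 * |(k:ℝ)|)) := by
    intro k hk
    have hu : Real.log y ≤ 0 := Real.log_nonpos hy.le hy1
    calc y * gk (h * (-Real.log y / h + k))
        ≤ Real.exp (Real.log y) * Real.exp (-|h * (-Real.log y / h + k)|) := by
          rw [Real.exp_log hy]; gcongr; exact gk_le _
      _ ≤ _ := by
        rw [← Real.exp_add, ← Real.exp_add]
        apply Real.exp_le_exp.mpr
        have e : h * (-Real.log y / h + k) = h * k - Real.log y := by field_simp; ring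
        have : |h * (k:ℝ)| - |Real.log y| ≤ |h * k - Real.log y| := abs_sub_abs_le_abs_sub _ _
        rw [e]
        rw [abs_of_nonpos hu, abs_mul, abs_of_pos hh] at this
        have := hS k hk
        nlinarith
  rw [← hsp, add_sub_cancel_left, abs_of_nonneg (tsum_nonneg fun _ => (gk_pos _).le)]
  have hsub := (summable_exp_abs (half_pos hh)).mul_left (Real.exp (-(h * M / 2)))
  have h2 : y * ∑' k : {k : ℤ // k ∉ S}, gk (h * (-Real.log y / h + (k:ℤ))) ≤
      Real.exp (-(h * M / 2)) * ∑' k : ℤ, Real.exp (-(h / 2 * |(k:ℝ)|)) := by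
    rw [← tsum_mul_left, ← tsum_mul_left]
    calc _ ≤ ∑' k : {k : ℤ // k ∉ S}, Real.exp (-(h * M / 2)) * Real.exp (-(h / 2 * |((k:ℤ):ℝ)|)) := by
          refine Summable.tsum_le_tsum (fun k => hb k k.2) ?_ ?_
          · exact (hsum.mul_left y).subtype {k | k ∉ S}
          · exact hsub.subtype {k | k ∉ S}
      _ ≤ _ := hsub.tsum_subtype_le _ {k | k ∉ S} (fun _ => by positivity)
  have h3 := sum_exp_le (h/2) (half_pos hh) (by linarith)
  have hE := Real.exp_pos (-(h * M / 2))
  calc _ = h * (y * ∑' k : {k : ℤ // k ∉ S}, gk (h * (-Real.log y / h + (k:ℤ)))) := by ring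
    _ ≤ h * (Real.exp (-(h * M / 2)) * ∑' k : ℤ, Real.exp (-(h / 2 * |(k:ℝ)|))) := by gcongr
    _ = 2 * Real.exp (-(h * M / 2)) * (h / 2 * ∑' k : ℤ, Real.exp (-(h / 2 * |(k:ℝ)|))) := by ring
    _ ≤ 2 * Real.exp (-(h * M / 2)) * (4 + 2 * K1) := by gcongr
    _ = _ := by ring

lemma term_eq (s y : ℝ) (hy : 0 < y) :
    Real.exp s - Real.exp s / (1 + y ^ 2 / Real.exp (2 * s)) = y * gk (s - Real.log y) := by
  unfold gk
  have e1 : Real.exp (s - Real.log y) = Real.exp s / y := by rw [Real.exp_sub, Real.exp_log hy]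
  have e2 : Real.exp (-(s - Real.log y)) = y / Real.exp s := by
    rw [neg_sub, Real.exp_sub, Real.exp_log hy]
  have e3 : Real.exp (2 * s) = Real.exp s ^ 2 := by rw [← Real.exp_nat_mul]; norm_num
  rw [e1, e2, e3]
  have := Real.exp_pos s
  field_simp
  ring

lemma main_bound (n : ℕ) (hn : 1 ≤ n) : ∃ (a : ℕ → ℝ) (ε : ℕ → ℝ),
        (∀ k ∈ Finset.Icc 1 n, 0 < ε k) ∧
        ∀ x ∈ Set.Icc (0 : ℝ) 1,
          |Real.sqrt x - (a 0 + ∑ k ∈ Finset.Icc 1 n, a k / (1 + x / ε k))| ≤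
            (K1 + (8 + 4 * K1) * Real.exp (1/4)) * Real.exp (-(Real.sqrt n / 4)) := by
  have hn' : (1:ℝ) ≤ n := by exact_mod_cast hn
  have hr1 : 1 ≤ Real.sqrt n := Real.one_le_sqrt.mpr hn'
  have hrr : Real.sqrt n * Real.sqrt n = n := Real.mul_self_sqrt (by positivity)
  set r := Real.sqrt n with hr
  have hr0 : 0 < r := by linarith
  obtain ⟨h, hh⟩ : ∃ h, h = 1 / r := ⟨_, rfl⟩
  have hh0 : 0 < h := by rw [hh]; positivity
  have hh1 : h ≤ 1 := by rw [hh, div_le_one hr0]; exact hr1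
  have hinv : 1 / h = r := by rw [hh]; simp
  have hK := K1_nonneg
  have hpi3 := Real.pi_gt_three
  let e : ℕ → ℤ := fun j => (j:ℤ) - ((n / 2 : ℕ) : ℤ)
  let c : ℝ := 2 * h / Real.pi
  let s : ℕ → ℝ := fun j => h * (e j : ℝ)
  refine ⟨fun j => if j = 0 then ∑ k ∈ Finset.Icc 1 n, c * Real.exp (s k) else - (c * Real.exp (s j)),
    fun j => Real.exp (2 * s j), fun _ _ => Real.exp_pos _, ?_⟩
  intro x hx
  have hform : ((if (0:ℕ) = 0 then ∑ k ∈ Finset.Icc 1 n, c * Real.exp (s k) else - (c * Real.exp (s 0))) +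
      ∑ k ∈ Finset.Icc 1 n, (if k = 0 then ∑ k ∈ Finset.Icc 1 n, c * Real.exp (s k) else - (c * Real.exp (s k)))
        / (1 + x / Real.exp (2 * s k))) =
      c * ∑ k ∈ Finset.Icc 1 n, (Real.exp (s k) - Real.exp (s k) / (1 + x / Real.exp (2 * s k))) := by
    rw [if_pos rfl, ← Finset.sum_add_distrib, Finset.mul_sum]
    refine Finset.sum_congr rfl fun k hk => ?_
    have : k ≠ 0 := by have := (Finset.mem_Icc.mp hk).1; omega
    rw [if_neg this]; ring
  beta_reduce
  rw [hform]
  rcases hx.1.eq_or_lt with h0 | hxpos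
  · rw [← h0]; simp; positivity
  set y := Real.sqrt x with hy
  have hy0 : 0 < y := Real.sqrt_pos.mpr hxpos
  have hy1 : y ≤ 1 := Real.sqrt_le_one.mpr hx.2
  have hxy : x = y ^ 2 := (Real.sq_sqrt hx.1).symm
  let S : Finset ℤ := (Finset.Icc 1 n).image e
  have hsumS : ∑ k ∈ Finset.Icc 1 n, (Real.exp (s k) - Real.exp (s k) / (1 + x / Real.exp (2 * s k)))
      = y * ∑ k ∈ S, gk (h * (-Real.log y / h + k)) := by
    rw [Finset.sum_image (by intro a _ b _ hab; simp only [e] at hab; omega), Finset.mul_sum]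
    refine Finset.sum_congr rfl fun k _ => ?_
    rw [hxy, term_eq _ _ hy0]
    congr 2
    simp only [s]
    field_simp
    ring
  have hS : ∀ k : ℤ, k ∉ S → ((n:ℝ) - 1) / 2 ≤ |(k:ℝ)| := by
    intro k hk
    have hk2 : (n:ℤ) - 1 ≤ 2 * |k| := by
      by_contra hcon
      apply hk
      refine Finset.mem_image.mpr ⟨(k + ((n/2 : ℕ) : ℤ)).toNat, ?_, ?_⟩
      · rw [Finset.mem_Icc]
        rcases abs_cases k with h | h <;> omega
      · simp only [e]
        rcases abs_cases k with h | h <;> omega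
    have : ((n:ℝ) - 1) ≤ 2 * |(k:ℝ)| := by exact_mod_cast hk2
    linarith
  rw [hsumS]
  have ht := tail h hh0 hh1 y hy0 hy1 S _ hS
  have hd := discr h hh0 hh1 (-Real.log y / h)
  rw [hinv] at hd
  set T := ∑' k : ℤ, gk (h * (-Real.log y / h + k))
  set P := ∑ k ∈ S, gk (h * (-Real.log y / h + k))
  have hid : y - c * (y * P) = 2 / Real.pi * (y * (-(h * T - Real.pi / 2)) + y * h * (T - P)) := by
    simp only [c]; field_simp; ring
  have hA : |y * (-(h * T - Real.pi / 2))| ≤ K1 * Real.exp (-(r / 4)) := by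
    rw [abs_mul, abs_neg, abs_of_pos hy0]
    calc _ ≤ 1 * |h * T - Real.pi / 2| := by gcongr
      _ ≤ K1 * Real.exp (-r) := by rw [one_mul]; exact hd
      _ ≤ _ := by gcongr; linarith
  have hB : |y * h * (T - P)| ≤ (8 + 4 * K1) * Real.exp (1/4) * Real.exp (-(r / 4)) := by
    rw [abs_mul, abs_of_pos (by positivity)]
    refine ht.trans ?_
    rw [mul_assoc, ← Real.exp_add]
    gcongr
    have : h * (((n:ℝ) - 1) / 2) / 2 = r / 4 - h / 4 := by
      rw [← hrr, hh]; field_simp; ring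
    rw [this]; linarith
  rw [hid, abs_mul, abs_of_pos (by positivity)]
  have h2pi : 2 / Real.pi ≤ 1 := by rw [div_le_one (by positivity)]; linarith
  calc _ ≤ 1 * |y * (-(h * T - Real.pi / 2)) + y * h * (T - P)| := by gcongr
    _ ≤ |y * (-(h * T - Real.pi / 2))| + |y * h * (T - P)| := by rw [one_mul]; exact abs_add_le _ _
    _ ≤ _ := by linarith

/-- Newman's theorem (1964): `√x` on `[0,1]` admits root-exponentially convergent
approximations by degree-`n` rational functions in partial fraction form with
poles `-ε_k` on the negative real axis. -/
theorem newman_sqrt_rational_approx :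
    ∃ C : ℝ, 0 < C ∧ ∀ n : ℕ, 1 ≤ n →
      ∃ (a : ℕ → ℝ) (ε : ℕ → ℝ),
        (∀ k ∈ Finset.Icc 1 n, 0 < ε k) ∧
        ∀ x ∈ Set.Icc (0 : ℝ) 1,
          |Real.sqrt x - (a 0 + ∑ k ∈ Finset.Icc 1 n, a k / (1 + x / ε k))| ≤
            Real.exp (-C * Real.sqrt n) := by
  set K : ℝ := K1 + (8 + 4 * K1) * Real.exp (1/4) with hK
  have hK1 : 1 ≤ K := by
    have h1 := K1_nonneg
    have h2 : 1 ≤ Real.exp (1/4) := Real.one_le_exp (by norm_num)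
    nlinarith
  have hL : 0 ≤ Real.log K := Real.log_nonneg hK1
  have hl2 : 0 < Real.log 2 := Real.log_pos (by norm_num)
  have hC2 : 0 < Real.log 2 / (8 * Real.log K + 1) := by positivity
  refine ⟨min (1/8) (Real.log 2 / (8 * Real.log K + 1)), lt_min (by norm_num) hC2, ?_⟩
  set C := min (1/8) (Real.log 2 / (8 * Real.log K + 1)) with hC
  have hCa : C ≤ 1/8 := min_le_left _ _
  have hCb : C * (8 * Real.log K + 1) ≤ Real.log 2 := by
    rw [← le_div_iff₀ (by positivity)]; exact min_le_right _ _
  have hC0 : 0 < C := lt_min (by norm_num) hC2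
  intro n hn
  have hr : 0 ≤ Real.sqrt n := Real.sqrt_nonneg _
  by_cases hcase : 8 * Real.log K ≤ Real.sqrt n
  · obtain ⟨a, ε, h1, h2⟩ := main_bound n hn
    refine ⟨a, ε, h1, fun x hx => (h2 x hx).trans ?_⟩
    rw [← hK]
    have hKe : K = Real.exp (Real.log K) := (Real.exp_log (by linarith)).symm
    rw [hKe, ← Real.exp_add]
    apply Real.exp_le_exp.mpr
    nlinarith
  · refine ⟨fun j => if j = 0 then 1/2 else 0, fun _ => 1, fun _ _ => one_pos, fun x hx => ?_⟩
    have hz : ∑ k ∈ Finset.Icc 1 n, (if k = 0 then (1/2 : ℝ) else 0) / (1 + x / 1) = 0 := by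
      refine Finset.sum_eq_zero fun k hk => ?_
      have : k ≠ 0 := by have := (Finset.mem_Icc.mp hk).1; omega
      rw [if_neg this, zero_div]
    beta_reduce
    rw [hz, if_pos rfl, add_zero]
    have hs0 := Real.sqrt_nonneg x
    have hs1 : Real.sqrt x ≤ 1 := Real.sqrt_le_one.mpr hx.2
    have hhalf : (1/2 : ℝ) = Real.exp (-Real.log 2) := by
      rw [Real.exp_neg, Real.exp_log (by norm_num)]; norm_num
    calc _ ≤ (1/2 : ℝ) := by rw [abs_le]; constructor <;> linarith
      _ = Real.exp (-Real.log 2) := hhalf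
      _ ≤ _ := by
        apply Real.exp_le_exp.mpr
        push Not at hcase
        nlinarith
end

section
/- There exists a constant C > 0 such that for every integer n ≥ 1 there exist real coefficients a_0, a_1, …, a_n and real shift parameters s_1, …, s_n such that for all s ∈ (−∞, 0], |e^{s/2} − (a_0 + Σ_{k=1}^n a_k/(1 + e^{s − s_k}))| ≤ exp(−C·√n). That is, the smooth function F(s) = e^{s/2} on (−∞,0] admits root-exponentially convergent approximation by a constant plus linear combinations of n translates of the logistic sigmoid function. -/
open MeasureTheory Finset

/-- The real Blaschke-type factor. -/
noncomputable def bl (e x : ℝ) : ℝ := (x - e) / (x + e)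

lemma bl_abs {e x : ℝ} (he : 0 < e) (hx : 0 ≤ x) : |bl e x| ≤ 1 := by
  unfold bl
  rw [abs_div, abs_of_pos (by linarith : 0 < x + e), div_le_one (by linarith)]
  exact abs_le.2 ⟨by linarith, by linarith⟩

lemma bl_cont {e : ℝ} (he : 0 < e) : Continuous fun y : ℝ => bl e (y ^ 2) := by
  unfold bl
  refine Continuous.div (by fun_prop) (by fun_prop) fun y => ?_
  positivity

lemma prod_abs (ε : ℕ → ℝ) (hε : ∀ i, 0 < ε i) (S : Finset ℕ) {x : ℝ} (hx : 0 ≤ x) :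
    |∏ i ∈ S, bl (ε i) x| ≤ 1 := by
  rw [Finset.abs_prod]
  exact Finset.prod_le_one (fun _ _ => abs_nonneg _) (fun i _ => bl_abs (hε i) hx)

lemma base_int {x : ℝ} (hx : 0 < x) : ∫ y : ℝ, 1 / (x + y ^ 2) = Real.pi / √x := by
  have h := Measure.integral_comp_mul_left (fun u : ℝ => (1 + u ^ 2)⁻¹) (√x)⁻¹
  rw [integral_univ_inv_one_add_sq] at h
  have hs : 0 < √x := Real.sqrt_pos.2 hx
  have h2 : ∀ y : ℝ, 1 / (x + y ^ 2) = x⁻¹ * (1 + ((√x)⁻¹ * y) ^ 2)⁻¹ := by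
    intro y
    rw [mul_pow, inv_pow, Real.sq_sqrt hx.le]
    field_simp
  simp_rw [h2]
  rw [integral_const_mul, h, inv_inv, abs_of_pos hs, smul_eq_mul]
  have := Real.sq_sqrt hx.le
  field_simp
  linarith

lemma base_integrable {x : ℝ} (hx : 0 < x) : Integrable fun y : ℝ => 1 / (x + y ^ 2) := by
  by_contra h
  have h1 := base_int hx
  rw [integral_undef h] at h1
  have : 0 < Real.pi / √x := div_pos Real.pi_pos (Real.sqrt_pos.2 hx)
  linarith

lemma bdd_integrable {x : ℝ} (hx : 0 < x) {w : ℝ → ℝ} (hw : Continuous w) {K : ℝ}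
    (hb : ∀ y, |w y| ≤ K) : Integrable fun y : ℝ => w y * (1 / (x + y ^ 2)) :=
  (base_integrable hx).bdd_mul hw.aestronglyMeasurable (Filter.Eventually.of_forall hb)

lemma key (ε : ℕ → ℝ) (hε : ∀ i, 0 < ε i) (hinj : Function.Injective ε) (S : Finset ℕ) :
    ∀ w : ℝ → ℝ, Continuous w → (∀ y, |w y| ≤ 1) → ∃ a : ℕ → ℝ, ∀ x : ℝ, 0 < x →
      ∫ y : ℝ, w y * (1 - (∏ i ∈ S, bl (ε i) x) * ∏ i ∈ S, bl (ε i) (y ^ 2)) * (1 / (x + y ^ 2))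
        = ∑ i ∈ S, a i / (x + ε i) := by
  induction S using Finset.induction_on with
  | empty => intro w _ _; exact ⟨0, fun x _ => by simp⟩
  | insert j S hj ih =>
    intro w hw hb
    obtain ⟨a, ha⟩ := ih (fun y => w y * bl (ε j) (y ^ 2)) (hw.mul (bl_cont (hε j)))
      (fun y => by
        rw [abs_mul]
        exact mul_le_one₀ (hb y) (abs_nonneg _) (bl_abs (hε j) (sq_nonneg y)))
    set I : ℝ := ∫ y : ℝ, w y * (1 / (ε j + y ^ 2)) with hI
    refine ⟨fun i => if i = j then 2 * ε j * I - ∑ k ∈ S, 2 * ε j * (-(a k) / (ε j - ε k))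
      else a i - 2 * ε j * (a i / (ε j - ε i)), fun x hx => ?_⟩
    have hP : Continuous fun y : ℝ => ∏ i ∈ S, bl (ε i) (y ^ 2) :=
      continuous_finsetProd _ fun i _ => bl_cont (hε i)
    have e1 : ∀ y : ℝ, w y * (1 - (∏ i ∈ insert j S, bl (ε i) x) *
        ∏ i ∈ insert j S, bl (ε i) (y ^ 2)) * (1 / (x + y ^ 2)) =
        2 * ε j / (x + ε j) * (w y * (1 / (ε j + y ^ 2))) +
        bl (ε j) x * (w y * bl (ε j) (y ^ 2) *
          (1 - (∏ i ∈ S, bl (ε i) x) * ∏ i ∈ S, bl (ε i) (y ^ 2)) * (1 / (x + y ^ 2))) := by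
      intro y
      rw [Finset.prod_insert hj, Finset.prod_insert hj]
      generalize (∏ i ∈ S, bl (ε i) x) = A
      generalize (∏ i ∈ S, bl (ε i) (y ^ 2)) = B
      have := hε j
      have h1 : x + ε j ≠ 0 := by positivity
      have h2 : y ^ 2 + ε j ≠ 0 := by positivity
      have h2' : ε j + y ^ 2 ≠ 0 := by positivity
      have h3 : x + y ^ 2 ≠ 0 := by positivity
      have h4 : 1 - bl (ε j) x * bl (ε j) (y ^ 2) =
          2 * ε j * (x + y ^ 2) / ((x + ε j) * (ε j + y ^ 2)) := by
        unfold bl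
        field_simp
        ring
      have h5 : 2 * ε j / (x + ε j) * (w y * (1 / (ε j + y ^ 2))) =
          w y * (1 - bl (ε j) x * bl (ε j) (y ^ 2)) * (1 / (x + y ^ 2)) := by
        rw [h4]
        field_simp
      rw [h5]
      ring
    simp_rw [e1]
    rw [integral_add, integral_const_mul, integral_const_mul, ha x hx, ← hI,
      Finset.sum_insert hj]
    · have e2 : ∀ i ∈ S, (if i = j then 2 * ε j * I - ∑ k ∈ S, 2 * ε j * (-(a k) / (ε j - ε k))
          else a i - 2 * ε j * (a i / (ε j - ε i))) / (x + ε i) =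
          bl (ε j) x * (a i / (x + ε i)) + 2 * ε j * (-(a i) / (ε j - ε i)) / (x + ε j) := by
        intro i hi
        have hne : i ≠ j := fun h => hj (h ▸ hi)
        have h0 : ε j - ε i ≠ 0 := sub_ne_zero.2 fun h => hne (hinj h).symm
        have := hε j
        have := hε i
        have h1 : x + ε j ≠ 0 := by positivity
        have h2 : x + ε i ≠ 0 := by positivity
        rw [if_neg hne]
        unfold bl
        field_simp
        ring
      rw [Finset.sum_congr rfl e2, if_pos rfl, Finset.sum_add_distrib, Finset.mul_sum,
        ← Finset.sum_div]
      ring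
    · exact (bdd_integrable (hε j) hw hb).const_mul _
    · refine (bdd_integrable hx (K := 2) ((hw.mul (bl_cont (hε j))).mul
        (continuous_const.sub (continuous_const.mul hP))) fun y => ?_).const_mul _
      have h1 : |w y * bl (ε j) (y ^ 2)| ≤ 1 := by
        rw [abs_mul]
        exact mul_le_one₀ (hb y) (abs_nonneg _) (bl_abs (hε j) (sq_nonneg y))
      have h2 : |(∏ i ∈ S, bl (ε i) x) * ∏ i ∈ S, bl (ε i) (y ^ 2)| ≤ 1 := by
        rw [abs_mul]
        exact mul_le_one₀ (prod_abs ε hε S hx.le) (abs_nonneg _) (prod_abs ε hε S (sq_nonneg y))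
      have h3 : |1 - (∏ i ∈ S, bl (ε i) x) * ∏ i ∈ S, bl (ε i) (y ^ 2)| ≤ 2 := by
        rw [abs_le] at h2 ⊢
        constructor <;> linarith [h2.1, h2.2]
      change |w y * bl (ε j) (y ^ 2) *
        (1 - (∏ i ∈ S, bl (ε i) x) * ∏ i ∈ S, bl (ε i) (y ^ 2))| ≤ 2
      rw [abs_mul]
      nlinarith [abs_nonneg (w y * bl (ε j) (y ^ 2)),
        abs_nonneg (1 - (∏ i ∈ S, bl (ε i) x) * ∏ i ∈ S, bl (ε i) (y ^ 2))]

lemma approx (ε : ℕ → ℝ) (hε : ∀ i, 0 < ε i) (hinj : Function.Injective ε) (S : Finset ℕ) :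
    ∃ a : ℕ → ℝ, ∀ x : ℝ, 0 < x →
      |√x - ∑ i ∈ S, a i * (x / (x + ε i))| ≤ |∏ i ∈ S, bl (ε i) x| * √x := by
  obtain ⟨a, ha⟩ := key ε hε hinj S (fun _ => 1) continuous_const (fun _ => by simp)
  refine ⟨fun i => a i / Real.pi, fun x hx => ?_⟩
  have h := ha x hx
  have hP : Continuous fun y : ℝ => ∏ i ∈ S, bl (ε i) (y ^ 2) :=
    continuous_finsetProd _ fun i _ => bl_cont (hε i)
  have hint := bdd_integrable hx hP (fun y => prod_abs ε hε S (sq_nonneg y))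
  have e1 : ∀ y : ℝ, (1:ℝ) * (1 - (∏ i ∈ S, bl (ε i) x) * ∏ i ∈ S, bl (ε i) (y ^ 2)) *
      (1 / (x + y ^ 2)) = 1 / (x + y ^ 2) -
      (∏ i ∈ S, bl (ε i) x) * ((∏ i ∈ S, bl (ε i) (y ^ 2)) * (1 / (x + y ^ 2))) := by
    intro y; ring
  simp_rw [e1] at h
  rw [integral_sub (base_integrable hx) (hint.const_mul _), integral_const_mul, base_int hx] at h
  set J := ∫ y : ℝ, (∏ i ∈ S, bl (ε i) (y ^ 2)) * (1 / (x + y ^ 2)) with hJ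
  have hJb : |J| ≤ Real.pi / √x := by
    rw [← base_int hx, ← Real.norm_eq_abs]
    refine norm_integral_le_of_norm_le (base_integrable hx) (Filter.Eventually.of_forall fun y => ?_)
    have : 0 < 1 / (x + y ^ 2) := by positivity
    rw [Real.norm_eq_abs, abs_mul, abs_of_pos this]
    nlinarith [prod_abs ε hε S (sq_nonneg y)]
  have hs : 0 < √x := Real.sqrt_pos.2 hx
  have hsq := Real.sq_sqrt hx.le
  have e2 : ∑ i ∈ S, a i / Real.pi * (x / (x + ε i)) =
      x / Real.pi * ∑ i ∈ S, a i / (x + ε i) := by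
    rw [Finset.mul_sum]
    exact Finset.sum_congr rfl fun i _ => by ring
  have hpi := Real.pi_pos
  have e3 : x / Real.pi * (Real.pi / √x) = √x := by
    field_simp
    linarith
  rw [e2, ← h, mul_sub, e3, sub_sub_cancel, abs_mul, abs_mul, abs_of_pos (div_pos hx hpi)]
  calc x / Real.pi * (|∏ i ∈ S, bl (ε i) x| * |J|)
      ≤ x / Real.pi * (|∏ i ∈ S, bl (ε i) x| * (Real.pi / √x)) := by gcongr
    _ = |∏ i ∈ S, bl (ε i) x| * (x / Real.pi * (Real.pi / √x)) := by ring
    _ = _ := by rw [e3]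

lemma bl_exp {s t : ℝ} (h1 : s - t ≤ 1) (h2 : t - s ≤ 1) :
    |bl (Real.exp t) (Real.exp s)| ≤ Real.exp (-(1/2)) := by
  have hs := Real.exp_pos s
  have ht := Real.exp_pos t
  have a1 : Real.exp s ≤ Real.exp 1 * Real.exp t := by
    rw [← Real.exp_add]; exact Real.exp_le_exp.2 (by linarith)
  have a2 : Real.exp t ≤ Real.exp 1 * Real.exp s := by
    rw [← Real.exp_add]; exact Real.exp_le_exp.2 (by linarith)
  have he : Real.exp 1 < 2.7182818286 := Real.exp_one_lt_d9
  have h3 : (1/2 : ℝ) ≤ Real.exp (-(1/2)) := by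
    have := Real.add_one_le_exp (-(1/2) : ℝ); linarith
  refine le_trans ?_ h3
  unfold bl
  rw [abs_div, abs_of_pos (add_pos hs ht), div_le_iff₀ (add_pos hs ht), abs_le]
  constructor <;> nlinarith

lemma prod_small (m : ℕ) (hm : 1 ≤ m) {s : ℝ} (hs : s ≤ 0) (hsm : -(m : ℝ) < s) :
    |∏ i ∈ range (m * m), bl (Real.exp (-(i / m : ℝ))) (Real.exp s)| ≤
      Real.exp (-(m / 2 : ℝ)) := by
  have hm0 : (0 : ℝ) < m := by exact_mod_cast hm
  set L := ⌊-s⌋₊ with hL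
  have hL1 : (L : ℝ) ≤ -s := Nat.floor_le (by linarith)
  have hL2 : -s < L + 1 := Nat.lt_floor_add_one _
  have hLm : L < m := by
    have : (L : ℝ) < m := by linarith
    exact_mod_cast this
  have hsub : Ico (L * m) (L * m + m) ⊆ range (m * m) := by
    intro i hi
    rw [Finset.mem_Ico] at hi
    rw [Finset.mem_range]
    nlinarith [hi.2]
  rw [Finset.abs_prod, ← Finset.prod_sdiff hsub]
  have p1 : ∏ i ∈ range (m * m) \ Ico (L * m) (L * m + m),
      |bl (Real.exp (-(i / m : ℝ))) (Real.exp s)| ≤ 1 :=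
    Finset.prod_le_one (fun _ _ => abs_nonneg _)
      (fun i _ => bl_abs (Real.exp_pos _) (Real.exp_pos _).le)
  have p2 : ∏ i ∈ Ico (L * m) (L * m + m),
      |bl (Real.exp (-(i / m : ℝ))) (Real.exp s)| ≤ Real.exp (-(m / 2 : ℝ)) := by
    have hc : ∏ i ∈ Ico (L * m) (L * m + m), |bl (Real.exp (-(i / m : ℝ))) (Real.exp s)| ≤
        ∏ i ∈ Ico (L * m) (L * m + m), Real.exp (-(1/2)) := by
      refine Finset.prod_le_prod (fun _ _ => abs_nonneg _) fun i hi => ?_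
      rw [Finset.mem_Ico] at hi
      have i1 : (L : ℝ) * m ≤ i := by exact_mod_cast hi.1
      have i2 : (i : ℝ) ≤ L * m + m := by exact_mod_cast hi.2.le
      have j1 : (L : ℝ) ≤ i / m := by rwa [le_div_iff₀ hm0]
      have j2 : (i / m : ℝ) ≤ L + 1 := by rw [div_le_iff₀ hm0]; linarith
      exact bl_exp (by linarith) (by linarith)
    refine hc.trans_eq ?_
    rw [Finset.prod_const, Nat.card_Ico, Nat.add_sub_cancel_left, ← Real.exp_nat_mul]
    congr 1; ring
  calc _ ≤ 1 * Real.exp (-(m / 2 : ℝ)) :=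
        mul_le_mul p1 p2 (Finset.prod_nonneg fun _ _ => abs_nonneg _) zero_le_one
    _ = _ := one_mul _

/-- The smooth function `F(s) = e^{s/2}` on `(-∞,0]` admits root-exponentially
convergent approximation by a constant plus linear combinations of `n` translates
of the logistic sigmoid function. -/
theorem sigmoid_approx_exp_half :
    ∃ C : ℝ, 0 < C ∧ ∀ n : ℕ, 1 ≤ n →
      ∃ (a : ℕ → ℝ) (s' : ℕ → ℝ),
        ∀ s ∈ Set.Iic (0 : ℝ),
          |Real.exp (s / 2) -
              (a 0 + ∑ k ∈ Finset.Icc 1 n, a k / (1 + Real.exp (s - s' k)))| ≤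
            Real.exp (-C * Real.sqrt n) := by
  refine ⟨1/4, by norm_num, fun n hn => ?_⟩
  set m := Nat.sqrt n with hmdef
  have hm : 1 ≤ m := Nat.le_sqrt.2 (by simpa using hn)
  have hm0 : (0 : ℝ) < m := by exact_mod_cast hm
  have hmn : m * m ≤ n := Nat.sqrt_le n
  have hroot : √(n : ℝ) ≤ 2 * m := by
    rw [Real.sqrt_le_left (by positivity)]
    have h1 : n < (m + 1) * (m + 1) := Nat.lt_succ_sqrt n
    have h2 : (n : ℝ) < (m + 1) * (m + 1) := by exact_mod_cast h1
    have h3 : (1 : ℝ) ≤ m := by exact_mod_cast hm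
    nlinarith
  obtain ⟨a, ha⟩ := approx (fun i => Real.exp (-(i / m : ℝ))) (fun i => Real.exp_pos _)
    (fun i j h => by
      have := Real.exp_injective h
      have h2 : (i : ℝ) = j := by
        field_simp at this
        linarith
      exact_mod_cast h2) (range (m * m))
  refine ⟨fun k => if k = 0 then ∑ i ∈ range (m * m), a i else
    if k - 1 < m * m then - a (k - 1) else 0, fun k => -(((k - 1 : ℕ) : ℝ) / m), fun s hs => ?_⟩
  have hs0 : s ≤ 0 := hs
  have hx := ha (Real.exp s) (Real.exp_pos s)
  have hsq : √(Real.exp s) = Real.exp (s / 2) := (Real.exp_half s).symm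
  rw [hsq] at hx
  have e1 : ∀ f : ℕ → ℝ, ∑ k ∈ Finset.Icc 1 n, f k = ∑ i ∈ range n, f (i + 1) := by
    intro f
    rw [Finset.range_eq_Ico, Finset.sum_Ico_add' f 0 n 1]
    rfl
  have e2 : (∑ i ∈ range (m * m), a i * (Real.exp s / (Real.exp s + Real.exp (-(i / m : ℝ))))) =
      (∑ i ∈ range (m * m), a i) + ∑ i ∈ range n, (if i < m * m then - a i else 0) /
        (1 + Real.exp (s - -((i : ℝ) / m))) := by
    rw [← Finset.sum_subset (Finset.range_subset_range.2 hmn), ← Finset.sum_add_distrib]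
    · refine Finset.sum_congr rfl fun i hi => ?_
      rw [if_pos (Finset.mem_range.1 hi), Real.exp_sub]
      have h1 := Real.exp_pos s
      have h2 := Real.exp_pos (-((i : ℝ) / m))
      field_simp
      ring
    · intro i _ hi
      rw [if_neg (by simpa using hi), zero_div]
  rw [e1]
  simp only [Nat.add_sub_cancel, Nat.succ_ne_zero, if_false, if_true]
  rw [← e2]
  refine hx.trans ?_
  have hfin : Real.exp (-(m / 2 : ℝ)) ≤ Real.exp (-(1/4) * √(n : ℝ)) :=
    Real.exp_le_exp.2 (by linarith)
  refine le_trans ?_ hfin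
  by_cases hc : -(m : ℝ) < s
  · have h1 := prod_small m hm hs0 hc
    have h2 : Real.exp (s / 2) ≤ 1 := Real.exp_le_one_iff.2 (by linarith)
    calc _ ≤ Real.exp (-(m / 2 : ℝ)) * 1 :=
          mul_le_mul h1 h2 (Real.exp_pos _).le (Real.exp_pos _).le
      _ = _ := mul_one _
  · have h1 := prod_abs (fun i => Real.exp (-(i / m : ℝ))) (fun i => Real.exp_pos _)
      (range (m * m)) (Real.exp_pos s).le
    have h2 : Real.exp (s / 2) ≤ Real.exp (-(m / 2 : ℝ)) :=
      Real.exp_le_exp.2 (by linarith [not_lt.1 hc])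
    calc _ ≤ 1 * Real.exp (-(m / 2 : ℝ)) :=
          mul_le_mul h1 h2 (Real.exp_pos _).le zero_le_one
      _ = _ := one_mul _
end

section
/- For every real α > 0 that is not an integer, there exists a constant C > 0 such that for every integer n ≥ 1 there exist real polynomials p and q, each of degree at most n, with q(x) > 0 for all x ∈ [0,1], such that |x^α − p(x)/q(x)| ≤ exp(−C·√n) for all x ∈ [0,1]. That is, the branch-point singular function x^α on [0,1] admits root-exponentially convergent type-(n,n) rational approximations. -/
/-- `f` agrees on `[0,1]` with a type-`(d,d)` rational function with positive denominator. -/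
def RatOn (d : ℕ) (f : ℝ → ℝ) : Prop :=
  ∃ p q : Polynomial ℝ, p.natDegree ≤ d ∧ q.natDegree ≤ d ∧
    (∀ x ∈ Set.Icc (0 : ℝ) 1, 0 < q.eval x) ∧
    ∀ x ∈ Set.Icc (0 : ℝ) 1, f x = p.eval x / q.eval x

lemma RatOn.add {d e : ℕ} {f g : ℝ → ℝ} (hf : RatOn d f) (hg : RatOn e g) :
    RatOn (d + e) (fun x => f x + g x) := by
  obtain ⟨p, q, hp, hq, hpos, h⟩ := hf
  obtain ⟨p', q', hp', hq', hpos', h'⟩ := hg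
  refine ⟨p * q' + q * p', q * q', ?_, ?_, ?_, ?_⟩
  · refine Polynomial.natDegree_add_le_of_degree_le ?_ ?_
    · exact Polynomial.natDegree_mul_le_of_le hp hq'
    · exact Polynomial.natDegree_mul_le_of_le hq hp'
  · exact Polynomial.natDegree_mul_le_of_le hq hq'
  · intro x hx
    rw [Polynomial.eval_mul]
    exact mul_pos (hpos x hx) (hpos' x hx)
  · intro x hx
    have h1 := (hpos x hx).ne'
    have h2 := (hpos' x hx).ne'
    simp only [h x hx, h' x hx, Polynomial.eval_mul, Polynomial.eval_add]
    rw [div_add_div _ _ h1 h2]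

lemma RatOn.sum {d : ℕ} (N : ℕ) {f : ℕ → ℝ → ℝ} (hf : ∀ j, RatOn d (f j)) :
    RatOn (N * d) (fun x => ∑ j ∈ Finset.range N, f j x) := by
  induction N with
  | zero => exact ⟨0, 1, by simp, by simp, by simp, by simp⟩
  | succ N ih =>
    have := ih.add (hf N)
    simpa only [Finset.sum_range_succ, Nat.succ_mul] using this

lemma RatOn.const_mul {d : ℕ} {f : ℝ → ℝ} (hf : RatOn d f) (c : ℝ) :
    RatOn d (fun x => c * f x) := by
  obtain ⟨p, q, hp, hq, hpos, h⟩ := hf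
  refine ⟨Polynomial.C c * p, q, (Polynomial.natDegree_C_mul_le _ _).trans hp, hq, hpos, ?_⟩
  intro x hx
  simp only [h x hx, Polynomial.eval_mul, Polynomial.eval_C]
  ring

lemma RatOn.pow_mul {d : ℕ} {f : ℝ → ℝ} (hf : RatOn d f) (m : ℕ) :
    RatOn (m + d) (fun x => x ^ m * f x) := by
  obtain ⟨p, q, hp, hq, hpos, h⟩ := hf
  refine ⟨Polynomial.X ^ m * p, q, ?_, by omega, hpos, ?_⟩
  · exact Polynomial.natDegree_mul_le_of_le (Polynomial.natDegree_X_pow_le m) hp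
  intro x hx
  simp only [h x hx, Polynomial.eval_mul, Polynomial.eval_pow, Polynomial.eval_X]
  ring

lemma RatOn.piece (k : ℕ) (w : ℕ → ℝ) {m : ℝ} (hm : 0 < m) :
    RatOn k (fun x => ∑ i ∈ Finset.range k, w i * (x / (m + x) ^ (i + 1))) := by
  refine ⟨∑ i ∈ Finset.range k, Polynomial.C (w i) *
      (Polynomial.X * (Polynomial.C m + Polynomial.X) ^ (k - 1 - i)),
    (Polynomial.C m + Polynomial.X) ^ k, ?_, ?_, ?_, ?_⟩
  · refine Polynomial.natDegree_sum_le_of_forall_le _ _ ?_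
    intro i hi
    have hi := Finset.mem_range.1 hi
    refine (Polynomial.natDegree_C_mul_le _ _).trans ?_
    have h1 : (Polynomial.C m + Polynomial.X).natDegree ≤ 1 := by
      rw [add_comm]; simp
    have h2 := Polynomial.natDegree_pow_le_of_le (k - 1 - i) h1
    have h3 := Polynomial.natDegree_mul_le_of_le (Polynomial.natDegree_X_le (R := ℝ)) h2
    omega
  · have h1 : (Polynomial.C m + Polynomial.X).natDegree ≤ 1 := by
      rw [add_comm]; simp
    simp
  · intro x hx
    have := hx.1
    simp only [Polynomial.eval_pow, Polynomial.eval_add, Polynomial.eval_C, Polynomial.eval_X]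
    positivity
  · intro x hx
    have := hx.1
    have hmx : 0 < m + x := by positivity
    simp only [Polynomial.eval_pow, Polynomial.eval_add, Polynomial.eval_C, Polynomial.eval_X,
      Polynomial.eval_finsetSum, Polynomial.eval_mul]
    rw [Finset.sum_div]
    refine Finset.sum_congr rfl fun i hi => ?_
    have hi := Finset.mem_range.1 hi
    have : (m + x) ^ k = (m + x) ^ (k - 1 - i) * (m + x) ^ (i + 1) := by
      rw [← pow_add]; congr 1; omega
    rw [this]
    field_simp

open Real Set MeasureTheory in
lemma piece_pointwise {p : ℝ} (hp : p ∈ Ioo (0:ℝ) 1) (k : ℕ) {a x t : ℝ} (ha : 0 < a) (hx : 0 ≤ x)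
    (ht : t ∈ Icc a (2 * a)) :
    rpowIntegrand₀₁ p t x -
      ∑ i ∈ Finset.range k, t ^ (p - 1) * (2 * a - t) ^ i * (x / (2 * a + x) ^ (i + 1))
      = ((2 * a - t) / (2 * a + x)) ^ k * rpowIntegrand₀₁ p t x := by
  have ht0 : 0 < t := ha.trans_le ht.1
  rw [rpowIntegrand₀₁_eq_pow_div hp ht0.le hx]
  set r := (2 * a - t) / (2 * a + x) with hr
  have hax : 0 < 2 * a + x := by positivity
  have htx : 0 < t + x := by positivity
  have h1 : 1 - r = (t + x) / (2 * a + x) := by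
    rw [hr]; field_simp; ring
  have hg := geom_sum_mul_neg r k
  have hs : ∑ i ∈ Finset.range k, t ^ (p - 1) * (2 * a - t) ^ i * (x / (2 * a + x) ^ (i + 1))
      = t ^ (p - 1) * x / (2 * a + x) * ∑ i ∈ Finset.range k, r ^ i := by
    rw [Finset.mul_sum]
    refine Finset.sum_congr rfl fun i _ => ?_
    rw [hr, div_pow, pow_succ]
    field_simp
  rw [hs]
  have h2 : t ^ (p - 1) * x / (2 * a + x) = t ^ (p - 1) * x / (t + x) * (1 - r) := by
    rw [h1]; field_simp
  rw [h2, mul_assoc, mul_comm (1 - r), hg]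
  ring

open Real Set MeasureTheory in
lemma piece_integral {p : ℝ} (hp : p ∈ Ioo (0:ℝ) 1) (k : ℕ) {a x : ℝ} (ha : 0 < a) (hx : 0 ≤ x) :
    |(∫ t in a..(2 * a), rpowIntegrand₀₁ p t x) -
      ∑ i ∈ Finset.range k, (∫ t in a..(2 * a), t ^ (p - 1) * (2 * a - t) ^ i) *
        (x / (2 * a + x) ^ (i + 1))|
      ≤ (1 / 2) ^ k * ∫ t in a..(2 * a), rpowIntegrand₀₁ p t x := by
  have hle : a ≤ 2 * a := by linarith
  have hu : uIcc a (2 * a) = Icc a (2 * a) := uIcc_of_le hle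
  have hf : IntervalIntegrable (fun t => rpowIntegrand₀₁ p t x) volume a (2 * a) := by
    apply ContinuousOn.intervalIntegrable
    rw [hu]
    exact (continuousOn_rpowIntegrand₀₁ hp hx).mono fun t ht => ha.trans_le ht.1
  have hg : ∀ i : ℕ, IntervalIntegrable (fun t : ℝ => t ^ (p - 1) * (2 * a - t) ^ i)
      volume a (2 * a) := by
    intro i
    apply ContinuousOn.intervalIntegrable
    rw [hu]
    refine ContinuousOn.mul ?_ (by fun_prop)
    exact ContinuousOn.rpow_const (by fun_prop) fun t ht => .inl (ha.trans_le ht.1).ne'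
  have hsI : IntervalIntegrable (fun t : ℝ => ∑ i ∈ Finset.range k,
      t ^ (p - 1) * (2 * a - t) ^ i * (x / (2 * a + x) ^ (i + 1))) volume a (2 * a) := by
    apply ContinuousOn.intervalIntegrable
    rw [hu]
    refine continuousOn_finsetSum _ fun i _ => ContinuousOn.mul ?_ continuousOn_const
    refine ContinuousOn.mul ?_ (by fun_prop)
    exact ContinuousOn.rpow_const (by fun_prop) fun t ht => .inl (ha.trans_le ht.1).ne'
  have hs : ∑ i ∈ Finset.range k, (∫ t in a..(2 * a), t ^ (p - 1) * (2 * a - t) ^ i) *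
        (x / (2 * a + x) ^ (i + 1)) = ∫ t in a..(2 * a), ∑ i ∈ Finset.range k,
          t ^ (p - 1) * (2 * a - t) ^ i * (x / (2 * a + x) ^ (i + 1)) := by
    rw [intervalIntegral.integral_finsetSum fun i _ => (hg i).mul_const _]
    simp only [intervalIntegral.integral_mul_const]
  rw [hs, ← intervalIntegral.integral_sub hf hsI,
    ← intervalIntegral.integral_const_mul, ← Real.norm_eq_abs]
  refine intervalIntegral.norm_integral_le_of_norm_le hle ?_ (hf.const_mul _)
  refine Filter.Eventually.of_forall fun t ht => ?_
  have ht' : t ∈ Icc a (2 * a) := ⟨ht.1.le, ht.2⟩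
  have ht0 : 0 < t := ha.trans ht.1
  have hax : 0 < 2 * a + x := by positivity
  rw [piece_pointwise hp k ha hx ht', norm_mul, Real.norm_eq_abs, Real.norm_eq_abs,
    abs_of_nonneg (rpowIntegrand₀₁_nonneg hp.1 ht0.le hx)]
  refine mul_le_mul_of_nonneg_right ?_ (rpowIntegrand₀₁_nonneg hp.1 ht0.le hx)
  have h0 : 0 ≤ (2 * a - t) / (2 * a + x) := div_nonneg (by linarith [ht.2]) hax.le
  rw [abs_of_nonneg (pow_nonneg h0 _)]
  refine pow_le_pow_left₀ h0 ?_ _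
  rw [div_le_div_iff₀ hax two_pos]
  linarith [ht.1]

open Real Set MeasureTheory in
lemma approx_step {p : ℝ} (hp : p ∈ Ioo (0:ℝ) 1) (k J : ℕ) :
    ∃ F : ℝ → ℝ, RatOn (2 * J * k) F ∧ ∀ x ∈ Icc (0:ℝ) 1, |x ^ p - F x| ≤
      (∫ t in Ioi 0, rpowIntegrand₀₁ p t 1)⁻¹ *
        (((1 / 2 : ℝ) ^ J) ^ p / p + ((2 : ℝ) ^ J) ^ (p - 1) / (1 - p)) + (1 / 2) ^ k := by
  set K := ∫ t in Ioi 0, rpowIntegrand₀₁ p t 1 with hK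
  have hKpos : 0 < K := integral_rpowIntegrand₀₁_one_pos hp
  set a : ℕ → ℝ := fun j => 2 ^ j * (1 / 2) ^ J with ha
  have hapos : ∀ j, 0 < a j := fun j => by simp only [ha]; positivity
  have hasucc : ∀ j, a (j + 1) = 2 * a j := fun j => by simp only [ha]; ring
  have ha0 : a 0 = (1 / 2) ^ J := by simp [ha]
  have haJ : a (2 * J) = 2 ^ J := by
    simp only [ha]
    rw [two_mul, pow_add, mul_assoc, ← mul_pow]; norm_num
  have hab : a 0 ≤ a (2 * J) := by
    rw [ha0, haJ]
    exact (pow_le_one₀ (by norm_num) (by norm_num)).trans (one_le_pow₀ (by norm_num))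
  refine ⟨fun x => K⁻¹ * ∑ j ∈ Finset.range (2 * J), ∑ i ∈ Finset.range k,
    (∫ t in a j..(2 * a j), t ^ (p - 1) * (2 * a j - t) ^ i) *
        (x / (2 * a j + x) ^ (i + 1)), ?_, ?_⟩
  · refine RatOn.const_mul ?_ _
    exact RatOn.sum (2 * J) fun j => RatOn.piece k _ (by linarith [hapos j])
  intro x hx
  have hx0 := hx.1
  have hint := integrableOn_rpowIntegrand₀₁_Ioi hp hx0
  have hrep := integral_rpowIntegrand₀₁_eq_rpow_mul_const hp hx0
  rw [← hK] at hrep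
  have hnn : ∀ t ∈ Ioi (0:ℝ), 0 ≤ rpowIntegrand₀₁ p t x := fun t ht =>
    rpowIntegrand₀₁_nonneg hp.1 (le_of_lt ht) hx0
  have hII : ∀ u v : ℝ, 0 ≤ u → 0 ≤ v →
      IntervalIntegrable (fun t => rpowIntegrand₀₁ p t x) volume u v := by
    intro u v hu hv
    rw [intervalIntegrable_iff]
    refine hint.mono_set fun t ht => ?_
    exact lt_of_le_of_lt (le_min hu hv) ht.1
  -- splitting
  have hsplit : ∫ t in Ioi 0, rpowIntegrand₀₁ p t x =
      (∫ t in (0:ℝ)..a 0, rpowIntegrand₀₁ p t x) +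
      (∑ j ∈ Finset.range (2 * J), ∫ t in a j..(2 * a j), rpowIntegrand₀₁ p t x) +
      ∫ t in Ioi (a (2 * J)), rpowIntegrand₀₁ p t x := by
    have h1 : ∑ j ∈ Finset.range (2 * J), ∫ t in a j..(2 * a j), rpowIntegrand₀₁ p t x
        = ∫ t in a 0..a (2 * J), rpowIntegrand₀₁ p t x := by
      rw [← intervalIntegral.sum_integral_adjacent_intervals
        fun j _ => hII _ _ (hapos j).le (hapos (j + 1)).le]
      simp only [hasucc]
    rw [h1, intervalIntegral.integral_add_adjacent_intervals (hII _ _ le_rfl (hapos 0).le)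
      (hII _ _ (hapos 0).le (hapos _).le)]
    exact (intervalIntegral.integral_interval_add_Ioi hint
      (hint.mono_set (Ioi_subset_Ioi (hapos _).le))).symm
  have hsum_le : (∑ j ∈ Finset.range (2 * J), ∫ t in a j..(2 * a j), rpowIntegrand₀₁ p t x)
      ≤ x ^ p * K := by
    rw [← hrep, hsplit]
    have h1 : 0 ≤ ∫ t in (0:ℝ)..a 0, rpowIntegrand₀₁ p t x :=
      intervalIntegral.integral_nonneg (hapos 0).le fun t ht =>
        rpowIntegrand₀₁_nonneg hp.1 ht.1 hx0
    have h2 : 0 ≤ ∫ t in Ioi (a (2 * J)), rpowIntegrand₀₁ p t x :=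
      setIntegral_nonneg measurableSet_Ioi fun t ht => hnn t ((hapos _).trans ht)
    linarith
  have htail0 : |∫ t in (0:ℝ)..a 0, rpowIntegrand₀₁ p t x| ≤ ((1 / 2 : ℝ) ^ J) ^ p / p := by
    have h1 : ∫ t in (0:ℝ)..a 0, t ^ (p - 1) = (a 0) ^ p / p := by
      rw [integral_rpow (.inl (by linarith [hp.1]))]
      simp [Real.zero_rpow hp.1.ne']
    rw [← ha0, ← h1, ← Real.norm_eq_abs]
    refine intervalIntegral.norm_integral_le_of_norm_le (hapos 0).le ?_
      (intervalIntegral.intervalIntegrable_rpow' (by linarith [hp.1]))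
    refine Filter.Eventually.of_forall fun t ht => ?_
    rw [Real.norm_eq_abs, abs_of_nonneg (hnn t ht.1)]
    exact rpowIntegrand₀₁_le_rpow_sub_one hp ht.1.le hx0
  have htail1 : |∫ t in Ioi (a (2 * J)), rpowIntegrand₀₁ p t x|
      ≤ ((2 : ℝ) ^ J) ^ (p - 1) / (1 - p) := by
    have hlt : p - 2 < -1 := by linarith [hp.2]
    have h1 : ∫ t in Ioi (a (2 * J)), t ^ (p - 2) = (a (2 * J)) ^ (p - 1) / (1 - p) := by
      rw [integral_Ioi_rpow_of_lt hlt (hapos _), show p - 2 + 1 = p - 1 by ring,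
        show 1 - p = -(p - 1) by ring, div_neg, neg_div]
    rw [← haJ, ← h1, ← Real.norm_eq_abs]
    refine norm_integral_le_of_norm_le (integrableOn_Ioi_rpow_of_lt hlt (hapos _)) ?_
    refine (ae_restrict_iff' measurableSet_Ioi).2 (Filter.Eventually.of_forall fun t ht => ?_)
    have ht0 : 0 < t := (hapos _).trans ht
    rw [Real.norm_eq_abs, abs_of_nonneg (hnn t ht0)]
    refine (rpowIntegrand₀₁_le_rpow_sub_two_mul_self hp ht0 hx0).trans ?_
    exact mul_le_of_le_one_right (by positivity) hx.2
  have hmid := (Finset.abs_sum_le_sum_abs (fun j =>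
      (∫ t in a j..(2 * a j), rpowIntegrand₀₁ p t x) - ∑ i ∈ Finset.range k,
      (∫ t in a j..(2 * a j), t ^ (p - 1) * (2 * a j - t) ^ i) *
        (x / (2 * a j + x) ^ (i + 1))) (Finset.range (2 * J))).trans
    (Finset.sum_le_sum fun j _ => piece_integral hp k (hapos j) hx0)
  rw [Finset.sum_sub_distrib, ← Finset.mul_sum] at hmid
  have hxp : x ^ p = K⁻¹ * ∫ t in Ioi 0, rpowIntegrand₀₁ p t x := by
    rw [hrep]; field_simp
  have hxp1 : x ^ p ≤ 1 := Real.rpow_le_one hx0 hx.2 hp.1.le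
  have hmid2 : (1 / 2 : ℝ) ^ k * (∑ j ∈ Finset.range (2 * J),
      ∫ t in a j..(2 * a j), rpowIntegrand₀₁ p t x) ≤ (1 / 2) ^ k * K := by
    refine mul_le_mul_of_nonneg_left (hsum_le.trans ?_) (by positivity)
    exact mul_le_of_le_one_left hKpos.le hxp1
  have hmid3 := hmid.trans hmid2
  rw [show ∀ A B : ℝ, K⁻¹ * A + B = K⁻¹ * (A + B * K) by intro A B; field_simp]
  rw [hxp, hsplit, ← mul_sub, abs_mul, abs_of_pos (inv_pos.2 hKpos)]
  refine mul_le_mul_of_nonneg_left ?_ (inv_pos.2 hKpos).le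
  generalize (∫ t in (0:ℝ)..a 0, rpowIntegrand₀₁ p t x) = A at *
  generalize (∫ t in Ioi (a (2 * J)), rpowIntegrand₀₁ p t x) = B at *
  rw [abs_le] at *
  constructor <;> linarith [htail0.1, htail0.2, htail1.1, htail1.2, hmid3.1, hmid3.2]

open Real Set in
lemma approx_exp {p : ℝ} (hp : p ∈ Ioo (0:ℝ) 1) :
    ∃ M c : ℝ, 1 ≤ M ∧ 0 < c ∧ ∀ J : ℕ, ∃ F : ℝ → ℝ, RatOn (2 * J * J) F ∧
      ∀ x ∈ Icc (0:ℝ) 1, |x ^ p - F x| ≤ M * exp (-c * J) := by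
  obtain ⟨hp0, hp1⟩ := id hp
  set K := ∫ t in Ioi 0, rpowIntegrand₀₁ p t 1 with hK
  have hKpos : 0 < K := integral_rpowIntegrand₀₁_one_pos hp
  have h1p : 0 < 1 - p := by linarith
  have hl2 : 0 < Real.log 2 := Real.log_pos one_lt_two
  have hγ : 0 < min p (1 - p) := lt_min hp0 h1p
  refine ⟨K⁻¹ * (1 / p + 1 / (1 - p)) + 1, Real.log 2 * min p (1 - p), ?_, by positivity, ?_⟩
  · have : 0 ≤ K⁻¹ * (1 / p + 1 / (1 - p)) := by positivity
    linarith
  intro J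
  obtain ⟨F, hF, hb⟩ := approx_step hp J J
  refine ⟨F, hF, fun x hx => (hb x hx).trans ?_⟩
  have hJ : (0:ℝ) ≤ J := Nat.cast_nonneg J
  set E := exp (-(Real.log 2 * min p (1 - p)) * J) with hE
  have key : ∀ s : ℝ, min p (1 - p) ≤ s → exp (-(Real.log 2 * s) * J) ≤ E := by
    intro s hs
    rw [hE, exp_le_exp]
    have := mul_le_mul_of_nonneg_left hs (mul_nonneg hl2.le hJ)
    linarith
  have e2 : (2:ℝ) ^ J = exp (Real.log 2 * J) := by
    rw [← Real.rpow_natCast, Real.rpow_def_of_pos two_pos]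
  have e1 : (1 / 2 : ℝ) ^ J = exp (-(Real.log 2 * J)) := by
    rw [one_div, inv_pow, e2, exp_neg]
  have b1 : ((1 / 2 : ℝ) ^ J) ^ p ≤ E := by
    rw [e1, ← exp_mul]
    convert key p (min_le_left _ _) using 2
    ring
  have b2 : ((2 : ℝ) ^ J) ^ (p - 1) ≤ E := by
    rw [e2, ← exp_mul]
    convert key (1 - p) (min_le_right _ _) using 2
    ring
  have b3 : (1 / 2 : ℝ) ^ J ≤ E := by
    rw [e1]
    convert key 1 ((min_le_left _ _).trans hp1.le) using 2
    ring
  calc _ ≤ K⁻¹ * (E / p + E / (1 - p)) + E := by gcongr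
    _ = _ := by ring

/-- The branch-point singular function `x^α` on `[0,1]` (for non-integer `α > 0`)
admits root-exponentially convergent type-`(n,n)` rational approximations. -/
theorem rpow_rational_approx_root_exponential (α : ℝ) (hα : 0 < α)
    (hα' : ¬∃ m : ℤ, α = m) :
    ∃ C : ℝ, 0 < C ∧ ∀ n : ℕ, 1 ≤ n →
      ∃ p q : Polynomial ℝ, p.natDegree ≤ n ∧ q.natDegree ≤ n ∧
        (∀ x ∈ Set.Icc (0 : ℝ) 1, 0 < q.eval x) ∧
        ∀ x ∈ Set.Icc (0 : ℝ) 1,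
          |x ^ α - p.eval x / q.eval x| ≤ Real.exp (-C * Real.sqrt n) := by
  obtain ⟨m, hm⟩ : ∃ m : ℕ, m = ⌊α⌋₊ := ⟨_, rfl⟩
  have hle : (m : ℝ) ≤ α := hm ▸ Nat.floor_le hα.le
  have hlt : α < m + 1 := hm ▸ Nat.lt_floor_add_one α
  have hne : α ≠ m := fun h => hα' ⟨m, by simpa using h⟩
  have hβ : α - m ∈ Set.Ioo (0:ℝ) 1 :=
    ⟨sub_pos.2 (lt_of_le_of_ne hle hne.symm), by linarith⟩
  obtain ⟨M, c, hM, hc, happ⟩ := approx_exp hβ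
  have hl2 : 0 < Real.log 2 := Real.log_pos one_lt_two
  have hlM : 0 ≤ Real.log M := Real.log_nonneg hM
  have hm0 : (0:ℝ) ≤ m := Nat.cast_nonneg m
  obtain ⟨T, hT⟩ : ∃ T : ℝ, T = max (4 * (Real.log M + c) / c) (2 * m + 1) := ⟨_, rfl⟩
  have hT1 : 4 * (Real.log M + c) / c ≤ T := hT ▸ le_max_left _ _
  have hT2 : 2 * m + 1 ≤ T := hT ▸ le_max_right _ _
  have hTpos : 0 < T := by linarith
  refine ⟨min (c / 4) (Real.log 2 / T), lt_min (by positivity) (by positivity), ?_⟩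
  intro n hn
  have hs0 : 0 ≤ Real.sqrt n := Real.sqrt_nonneg _
  have hss : Real.sqrt n * Real.sqrt n = n := Real.mul_self_sqrt (Nat.cast_nonneg n)
  generalize Real.sqrt n = s at *
  rcases lt_or_ge s T with hsT | hsT
  · refine ⟨Polynomial.C (1 / 2), 1, by simp, by simp, by simp, ?_⟩
    intro x hx
    have h1 : x ^ α ≤ 1 := Real.rpow_le_one hx.1 hx.2 hα.le
    have h0 : 0 ≤ x ^ α := Real.rpow_nonneg hx.1 _
    have h2 : |x ^ α - 1 / 2| ≤ 1 / 2 := by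
      rw [abs_le]; constructor <;> linarith
    have h3 : min (c / 4) (Real.log 2 / T) * s ≤ Real.log 2 := by
      calc _ ≤ Real.log 2 / T * T := by
            gcongr
            exact min_le_right _ _
        _ = Real.log 2 := by field_simp
    have h4 : (1 / 2 : ℝ) = Real.exp (-Real.log 2) := by
      rw [Real.exp_neg, Real.exp_log two_pos, one_div]
    simp only [Polynomial.eval_C, Polynomial.eval_one, div_one]
    refine h2.trans ?_
    rw [h4, Real.exp_le_exp]
    linarith
  · obtain ⟨J, hJ⟩ : ∃ J : ℕ, J = ⌊s / 2⌋₊ := ⟨_, rfl⟩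
    have hJle : (J : ℝ) ≤ s / 2 := hJ ▸ Nat.floor_le (by positivity)
    have hJlt : s / 2 < J + 1 := hJ ▸ Nat.lt_floor_add_one _
    have hJ0 : (0:ℝ) ≤ J := Nat.cast_nonneg J
    obtain ⟨F, hF, hb⟩ := happ J
    obtain ⟨p, q, hp, hq, hpos, hpq⟩ := hF.pow_mul m
    have hdeg : m + 2 * J * J ≤ n := by
      have : (m : ℝ) + 2 * J * J ≤ n := by nlinarith
      exact_mod_cast this
    refine ⟨p, q, hp.trans hdeg, hq.trans hdeg, hpos, ?_⟩
    intro x hx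
    have hxa : x ^ α = x ^ m * x ^ (α - m) := by
      rw [← Real.rpow_natCast x m, ← Real.rpow_add_of_nonneg hx.1 hm0 hβ.1.le]
      congr 1; ring
    rw [← hpq x hx, hxa, ← mul_sub, abs_mul, abs_of_nonneg (pow_nonneg hx.1 m)]
    have h1 : x ^ m * |x ^ (α - m) - F x| ≤ |x ^ (α - m) - F x| :=
      mul_le_of_le_one_left (abs_nonneg _) (pow_le_one₀ hx.1 hx.2)
    refine (h1.trans (hb x hx)).trans ?_
    rw [← Real.exp_log (by linarith : 0 < M), ← Real.exp_add, Real.exp_le_exp]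
    have h2 : min (c / 4) (Real.log 2 / T) * s ≤ c / 4 * s := by
      gcongr
      exact min_le_left _ _
    have h3 : 4 * (Real.log M + c) ≤ s * c := (div_le_iff₀ hc).1 (hT1.trans hsT)
    nlinarith
end
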